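/- Let A, B be 6×6 complex matrices with rank(A : B) = 6 (the 6×12 block matrix formed by A and B side by side) and A C₆ A* = B C₆ B*, where C₆ = ((-1)^r δ_{r,7-s})_{r,s=1}^6. Then 3 ≤ rank A ≤ 6 and 3 ≤ rank B ≤ 6. -/

import Mathlib

open Matrix

/-- The 6×6 symplectic matrix `C₆ = ((-1)^r δ_{r,7-s})_{r,s=1}^6`, 0-based indices. -/
def C6 : Matrix (Fin 6) (Fin 6) ℂ :=
  Matrix.of fun r s => (-1 : ℂ) ^ ((r : ℕ) + 1) * (if (r : ℕ) + (s : ℕ) = 5 then 1 else 0)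

/-!
Put `W = Bᴴ (ker Aᴴ)`, so that `rank (A : B) = rank A + dim W`. If `A J Aᴴ = B J' Bᴴ`, then
`B J'` annihilates `W`, hence `dim W ≤ p - rank (B J') = p - rank B`, where `p` is the number of
columns of `B`; clearly also `dim W ≤ rank B`. Adding the two gives `2 dim W ≤ p`.
-/

section CommSemiring

variable {R m n p : Type*} [CommSemiring R]

lemma rank_fromCols_comm [Fintype n] [Fintype p] (A : Matrix m n R) (B : Matrix m p R) :
    (fromCols B A).rank = (fromCols A B).rank := by
  rw [← rank_submatrix (fromCols A B) (Equiv.refl m) (Equiv.sumComm p n)]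
  congr 1
  ext i (j | j) <;> rfl

lemma star_mulVec_eq_map_star_mulVec [StarRing R] [Fintype n] (A : Matrix m n R) (x : n → R) :
    star (A *ᵥ x) = A.map star *ᵥ star x := by
  rw [star_mulVec, conjTranspose, transpose_map, vecMul_transpose]

lemma rank_map_star [StarRing R] [Fintype n] (A : Matrix m n R) : (A.map star).rank = A.rank := by
  let σ : (m → R) ≃ₗ⋆[R] (m → R) := starLinearEquiv R
  have map_range : (LinearMap.range A.mulVecLin).map σ.toLinearMap =
      LinearMap.range (A.map star).mulVecLin := by
    ext y
    constructor
    · rintro ⟨_, ⟨x, rfl⟩, rfl⟩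
      exact ⟨star x, (star_mulVec_eq_map_star_mulVec A x).symm⟩
    · rintro ⟨x, rfl⟩
      refine ⟨_, ⟨star x, rfl⟩, ?_⟩
      simpa [σ] using star_mulVec_eq_map_star_mulVec A (star x)
  let e := σ.submoduleMap (LinearMap.range A.mulVecLin)
  rw [Matrix.rank, Matrix.rank, ← map_range]
  exact congrArg Cardinal.toNat (rank_eq_of_equiv_equiv (starRingEnd R) e.toAddEquiv
    (starRingAut (R := R)).bijective e.map_smulₛₗ).symm

end CommSemiring

section Field

open Module

variable {K m n p k : Type*} [Field K]

lemma rank_fromRows [Fintype k] (P : Matrix n k K) (Q : Matrix p k K) :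
    (fromRows P Q).rank =
      P.rank + finrank K ((LinearMap.ker P.mulVecLin).map Q.mulVecLin) := by
  let g := Q.mulVecLin.domRestrict (LinearMap.ker P.mulVecLin)
  have ker_fromRows : (LinearMap.ker g).map (LinearMap.ker P.mulVecLin).subtype =
      LinearMap.ker (fromRows P Q).mulVecLin := by
    ext x
    simp [g, ← Sum.elim_zero_zero, Sum.elim_eq_iff, and_comm]
  have finrank_ker_g :
      finrank K (LinearMap.ker g) = finrank K (LinearMap.ker (fromRows P Q).mulVecLin) := by
    rw [← ker_fromRows, Submodule.finrank_map_subtype_eq]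
  have nullity_g := g.finrank_range_add_finrank_ker
  rw [LinearMap.range_domRestrict, finrank_ker_g] at nullity_g
  have nullity_P := P.mulVecLin.finrank_range_add_finrank_ker
  have nullity_fromRows := (fromRows P Q).mulVecLin.finrank_range_add_finrank_ker
  simp only [Matrix.rank]
  omega

lemma two_mul_rank_fromRows_le_of_mul_eq_mul [Fintype k] [Fintype n] [Fintype p]
    {A : Matrix m n K} {B : Matrix m p K} {P : Matrix n k K} {Q : Matrix p k K}
    (h : A * P = B * Q) (hQB : Q.rank ≤ B.rank) :
    2 * (fromRows P Q).rank ≤ 2 * P.rank + Fintype.card p := by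
  set W := (LinearMap.ker P.mulVecLin).map Q.mulVecLin with hW
  have W_le_ker : W ≤ LinearMap.ker B.mulVecLin := by
    rintro _ ⟨x, hx : P *ᵥ x = 0, rfl⟩
    change B *ᵥ (Q *ᵥ x) = 0
    rw [mulVec_mulVec, ← h, ← mulVec_mulVec, hx, mulVec_zero]
  have finrank_W_le_nullity : finrank K W ≤ finrank K (LinearMap.ker B.mulVecLin) :=
    Submodule.finrank_mono W_le_ker
  have finrank_W_le_rank : finrank K W ≤ Q.rank :=
    Submodule.finrank_mono LinearMap.map_le_range
  have nullity_B : B.rank + finrank K (LinearMap.ker B.mulVecLin) = Fintype.card p := by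
    rw [Matrix.rank, LinearMap.finrank_range_add_finrank_ker, finrank_fintype_fun_eq_card]
  rw [rank_fromRows, ← hW]
  omega

section StarRing

variable [StarRing K]

-- `Matrix.rank_conjTranspose` needs a star-ordered field, which excludes positive characteristic.
lemma rank_conjTranspose_of_starRing [Fintype m] [Fintype n] (A : Matrix m n K) :
    Aᴴ.rank = A.rank := by
  rw [conjTranspose, transpose_map, rank_transpose, rank_map_star]

lemma two_mul_rank_fromCols_le [Finite m] [Fintype n] [Fintype p] [DecidableEq p]
    {A : Matrix m n K} {B : Matrix m p K} {J : Matrix n n K} {J' : Matrix p p K}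
    (hJ' : IsUnit J'.det) (h : A * J * Aᴴ = B * J' * Bᴴ) :
    2 * (fromCols A B).rank ≤ 2 * A.rank + Fintype.card p := by
  have := Fintype.ofFinite m
  have hB : Bᴴ.rank ≤ (B * J').rank := by
    rw [rank_mul_eq_left_of_isUnit_det J' B hJ', rank_conjTranspose_of_starRing]
  rw [← rank_conjTranspose_of_starRing (fromCols A B),
    conjTranspose_fromCols_eq_fromRows_conjTranspose, ← rank_conjTranspose_of_starRing A]
  exact two_mul_rank_fromRows_le_of_mul_eq_mul h hB

theorem rank_bounds_general [Finite m] [Fintype n] [Fintype p] [DecidableEq n] [DecidableEq p]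
    {A : Matrix m n K} {B : Matrix m p K} {J : Matrix n n K} {J' : Matrix p p K}
    (hJ : IsUnit J.det) (hJ' : IsUnit J'.det) (h : A * J * Aᴴ = B * J' * Bᴴ) :
    2 * (fromCols A B).rank ≤ 2 * A.rank + Fintype.card p ∧
      2 * (fromCols A B).rank ≤ 2 * B.rank + Fintype.card n :=
  ⟨two_mul_rank_fromCols_le hJ' h,
    rank_fromCols_comm A B ▸ two_mul_rank_fromCols_le hJ h.symm⟩

end StarRing

end Field

lemma C6_mul_self : C6 * C6 = -1 := by
  ext i j
  fin_cases i <;> fin_cases j <;> simp [C6, mul_apply, Fin.sum_univ_succ] <;> norm_num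

lemma isUnit_det_C6 : IsUnit C6.det :=
  isUnit_det_of_left_inverse (B := -C6) (by rw [neg_mul, C6_mul_self, neg_neg])

theorem rank_bounds (A B : Matrix (Fin 6) (Fin 6) ℂ)
    (hrank : (Matrix.of fun i => Sum.elim (A i) (B i) :
        Matrix (Fin 6) (Fin 6 ⊕ Fin 6) ℂ).rank = 6)
    (hsa : A * C6 * Aᴴ = B * C6 * Bᴴ) :
    (3 ≤ A.rank ∧ A.rank ≤ 6) ∧ (3 ≤ B.rank ∧ B.rank ≤ 6) := by
  have hfromCols : (fromCols A B).rank = 6 := hrank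
  obtain ⟨hA, hB⟩ := rank_bounds_general isUnit_det_C6 isUnit_det_C6 hsa
  rw [hfromCols, Fintype.card_fin] at hA hB
  have := A.rank_le_width
  have := B.rank_le_width
  omega
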